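/- arXiv:2405.19786 — 2 statements merged into one kernel-verified Lean document; each statement's English description precedes it below -/
import Mathlib

section
/- Let p > N ≥ 2 and let {x₁,…,x_k} be distinct points in B_R with k ≥ 2. Then cap_p({x₁,…,x_{k-1}}; B_R) < cap_p({x₁,…,x_k}; B_R), i.e. the relative p-capacity strictly increases when an extra point is added. -/
open MeasureTheory Filter
open scoped ENNReal

noncomputable section

/-- Relative `p`-capacity of a compact set `K` inside an open set `E`:
infimum of the `p`-Dirichlet energy over smooth compactly supported functions
in `E` which are at least `1` on `K`. -/
noncomputable def pCapacity {N : ℕ} (p : ℝ) (K E : Set (EuclideanSpace ℝ (Fin N))) : ℝ :=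
  sInf {c : ℝ | ∃ φ : EuclideanSpace ℝ (Fin N) → ℝ, ContDiff ℝ (⊤ : ℕ∞) φ ∧ HasCompactSupport φ ∧
    tsupport φ ⊆ E ∧ (∀ x ∈ K, 1 ≤ φ x) ∧ c = ∫ x, ‖fderiv ℝ φ x‖ ^ p}


lemma aux_hom {N : ℕ} (t : ℝ) (ht : 0 < t) (x : EuclideanSpace ℝ (Fin N))
    (G : EuclideanSpace ℝ (Fin N) → ℝ≥0∞) (hG : Measurable G) :
    ∫⁻ y, G (x + t • (y - x)) = ENNReal.ofReal ((t ^ N)⁻¹) * ∫⁻ y, G y := by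
  rw [lintegral_sub_right_eq_self (fun y => G (x + t • y)) x]
  have h1 : ∫⁻ y, G (x + t • y) = ∫⁻ z, G (x + z) ∂(Measure.map (fun y => t • y) volume) := by
    rw [lintegral_map (by fun_prop) (by fun_prop)]
  rw [h1, Measure.map_addHaar_smul _ ht.ne', lintegral_smul_measure,
    lintegral_add_left_eq_self (fun y => G y) x, finrank_euclideanSpace_fin,
    abs_of_pos (by positivity), smul_eq_mul]

lemma aux_ftc {N : ℕ} (f : EuclideanSpace ℝ (Fin N) → ℝ) (hf : ContDiff ℝ 1 f)
    (x y : EuclideanSpace ℝ (Fin N)) (d : ℝ) (hd : ‖y - x‖ ≤ d) :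
    ‖f y - f x‖ₑ ≤ ∫⁻ t in Set.Ioc (0:ℝ) 1,
      ‖fderiv ℝ f (x + t • (y - x))‖ₑ * ENNReal.ofReal d := by
  have hc : Continuous (fderiv ℝ f) := hf.continuous_fderiv (by norm_num)
  have h1 : ∫ t in (0:ℝ)..1, fderiv ℝ f (x + t • (y - x)) (y - x)
      = f (x + (1:ℝ) • (y - x)) - f (x + (0:ℝ) • (y - x)) := by
    refine intervalIntegral.integral_eq_sub_of_hasDerivAt (f := fun t : ℝ => f (x + t • (y - x)))
      ?_ ?_
    · intro t _
      have h2 : HasDerivAt (fun t : ℝ => x + t • (y - x)) (y - x) t := by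
        simpa using ((hasDerivAt_id t).smul_const (y - x)).const_add x
      exact ((hf.differentiable (by norm_num) _).hasFDerivAt).comp_hasDerivAt t h2
    · apply Continuous.intervalIntegrable
      exact (hc.comp (by fun_prop)).clm_apply continuous_const
  have h3 : f y - f x = ∫ t in Set.Ioc (0:ℝ) 1, fderiv ℝ f (x + t • (y - x)) (y - x) := by
    rw [← intervalIntegral.integral_of_le zero_le_one, h1]; simp
  rw [h3]
  refine (enorm_integral_le_lintegral_enorm _).trans (lintegral_mono fun t => ?_)
  refine (ContinuousLinearMap.le_opENorm _ _).trans ?_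
  gcongr
  rw [← ofReal_norm]
  exact ENNReal.ofReal_le_ofReal hd

lemma aux_morrey {N : ℕ} (p : ℝ) (hN : 2 ≤ N) (hp : (N:ℝ) < p)
    (U : Set (EuclideanSpace ℝ (Fin N))) (hU : MeasurableSet U) (hconv : Convex ℝ U) (d : ℝ)
    (hd : ∀ x ∈ U, ∀ y ∈ U, ‖y - x‖ ≤ d)
    (f : EuclideanSpace ℝ (Fin N) → ℝ) (hf : ContDiff ℝ 1 f)
    (x : EuclideanSpace ℝ (Fin N)) (hx : x ∈ U) :
    ∫⁻ y in U, ‖f y - f x‖ₑ ≤ ENNReal.ofReal d * (ENNReal.ofReal ((1 - N / p)⁻¹) *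
      ((∫⁻ y in U, ‖fderiv ℝ f y‖ₑ ^ p) ^ (1 / p) * volume U ^ (1 - 1 / p))) := by
  have hN' : (2:ℝ) ≤ N := by exact_mod_cast hN
  have hp1 : 1 < p := by linarith
  have hp0 : 0 < p := by linarith
  have hc : Continuous (fderiv ℝ f) := hf.continuous_fderiv (by norm_num)
  set I := ∫⁻ y in U, ‖fderiv ℝ f y‖ₑ ^ p with hI
  have hq : p.HolderConjugate (p.conjExponent) := Real.HolderConjugate.conjExponent hp1
  have key : ∀ t ∈ Set.Ioc (0:ℝ) 1, ∫⁻ y in U, ‖fderiv ℝ f (x + t • (y - x))‖ₑ ≤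
      ENNReal.ofReal (t ^ (-(N / p))) * (I ^ (1 / p) * volume U ^ (1 - 1 / p)) := by
    intro t ht
    have h1 := ENNReal.lintegral_mul_le_Lp_mul_Lq (volume.restrict U) hq
      (f := fun y => ‖fderiv ℝ f (x + t • (y - x))‖ₑ) (g := fun _ => 1)
      (by fun_prop) (by fun_prop)
    simp only [Pi.mul_apply, mul_one, ENNReal.one_rpow, lintegral_const, one_mul,
      Measure.restrict_apply MeasurableSet.univ, Set.univ_inter] at h1
    refine h1.trans ?_
    have h2 : 1 / p.conjExponent = 1 - 1 / p := by
      have := hq.inv_add_inv_eq_one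
      simp only [one_div]; linarith
    rw [h2, ← mul_assoc]
    gcongr
    have h3 : ∫⁻ y in U, ‖fderiv ℝ f (x + t • (y - x))‖ₑ ^ p ≤
        ENNReal.ofReal ((t ^ N)⁻¹) * I := by
      have hm : Measurable (U.indicator fun y => ‖fderiv ℝ f y‖ₑ ^ p) := by
        apply Measurable.indicator _ hU
        fun_prop
      rw [hI, ← lintegral_indicator hU, ← lintegral_indicator hU, ← aux_hom t ht.1 x _ hm]
      refine lintegral_mono fun y => ?_
      by_cases hy : y ∈ U
      · have hm : x + t • (y - x) ∈ U := hconv.add_smul_sub_mem hx hy ⟨ht.1.le, ht.2⟩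
        simp [hy, hm]
      · simp [hy]
    calc (∫⁻ y in U, ‖fderiv ℝ f (x + t • (y - x))‖ₑ ^ p) ^ (1 / p)
        ≤ (ENNReal.ofReal ((t ^ N)⁻¹) * I) ^ (1 / p) := by gcongr
      _ = ENNReal.ofReal (t ^ (-(N / p))) * I ^ (1 / p) := by
        rw [ENNReal.mul_rpow_of_nonneg _ _ (by positivity),
          ENNReal.ofReal_rpow_of_nonneg (inv_nonneg.2 (pow_nonneg ht.1.le _)) (by positivity)]
        congr 2
        rw [← Real.rpow_natCast, ← Real.rpow_neg ht.1.le, ← Real.rpow_mul ht.1.le]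
        congr 1; ring
  have hint : ∫⁻ t in Set.Ioc (0:ℝ) 1, ENNReal.ofReal (t ^ (-(N / p))) =
      ENNReal.ofReal ((1 - N / p)⁻¹) := by
    have hlt : (N:ℝ) / p < 1 := by rw [div_lt_one hp0]; exact hp
    have hii : IntervalIntegrable (fun t : ℝ => t ^ (-(N / p))) volume 0 1 :=
      intervalIntegral.intervalIntegrable_rpow' (by linarith)
    rw [← ofReal_integral_eq_lintegral_ofReal
      ((intervalIntegrable_iff_integrableOn_Ioc_of_le zero_le_one).1 hii) ?_,
      ← intervalIntegral.integral_of_le zero_le_one, integral_rpow (Or.inl (by linarith))]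
    · congr 1
      rw [Real.one_rpow, Real.zero_rpow (by linarith)]
      rw [← one_div]; congr 1 <;> ring
    · filter_upwards [ae_restrict_mem measurableSet_Ioc] with t ht
      exact Real.rpow_nonneg ht.1.le _
  calc ∫⁻ y in U, ‖f y - f x‖ₑ
      ≤ ∫⁻ y in U, ∫⁻ t in Set.Ioc (0:ℝ) 1,
        ‖fderiv ℝ f (x + t • (y - x))‖ₑ * ENNReal.ofReal d := by
        refine lintegral_mono_ae ?_
        filter_upwards [ae_restrict_mem hU] with y hy
        exact aux_ftc f hf x y d (hd x hx y hy)
    _ = ∫⁻ t in Set.Ioc (0:ℝ) 1, ∫⁻ y in U,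
        ‖fderiv ℝ f (x + t • (y - x))‖ₑ * ENNReal.ofReal d := by
        refine lintegral_lintegral_swap ?_
        apply Measurable.aemeasurable
        apply Measurable.mul_const
        apply Continuous.measurable
        apply Continuous.enorm
        exact hc.comp (by fun_prop)
    _ ≤ ∫⁻ t in Set.Ioc (0:ℝ) 1, ENNReal.ofReal (t ^ (-(N / p))) *
          ((I ^ (1 / p) * volume U ^ (1 - 1 / p)) * ENNReal.ofReal d) := by
        refine lintegral_mono_ae ?_
        filter_upwards [ae_restrict_mem measurableSet_Ioc] with t ht
        rw [lintegral_mul_const _ (by fun_prop), ← mul_assoc]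
        gcongr
        exact key t ht
    _ = _ := by
        rw [lintegral_mul_const _ (by fun_prop), hint]
        ring

lemma aux_morrey2 {N : ℕ} (p : ℝ) (hN : 2 ≤ N) (hp : (N:ℝ) < p)
    (U : Set (EuclideanSpace ℝ (Fin N))) (hU : MeasurableSet U) (hconv : Convex ℝ U) (d : ℝ)
    (hd : ∀ x ∈ U, ∀ y ∈ U, ‖y - x‖ ≤ d) (V : ℝ) (hV : 0 < V)
    (hVU : volume U = ENNReal.ofReal V)
    (f : EuclideanSpace ℝ (Fin N) → ℝ) (hf : ContDiff ℝ 1 f) (B : ℝ) (hB : 0 ≤ B)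
    (hfB : ∫⁻ y in U, ‖fderiv ℝ f y‖ₑ ^ p ≤ ENNReal.ofReal B)
    (x : EuclideanSpace ℝ (Fin N)) (hx : x ∈ U)
    (y : EuclideanSpace ℝ (Fin N)) (hy : y ∈ U) :
    |f x - f y| ≤ 2 * (d * ((1 - N / p)⁻¹ * (B ^ (1 / p) * V ^ (-(1 / p))))) := by
  have hN' : (2:ℝ) ≤ N := by exact_mod_cast hN
  have hp0 : 0 < p := by linarith
  have hlt : (N:ℝ) / p < 1 := by rw [div_lt_one hp0]; exact hp
  have hd0 : 0 ≤ d := (norm_nonneg _).trans (hd x hx x hx)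
  have hpos : 0 < 1 - (N:ℝ) / p := by linarith
  have hc := hf.continuous
  set A := d * ((1 - N / p)⁻¹ * (B ^ (1 / p) * V ^ (1 -(1 / p)))) with hA
  have hA0 : 0 ≤ A := by positivity
  have h1 : ∀ x ∈ U, ∫⁻ y in U, ‖f y - f x‖ₑ ≤ ENNReal.ofReal A := by
    intro x hx
    refine (aux_morrey p hN hp U hU hconv d hd f hf x hx).trans ?_
    rw [hA, ENNReal.ofReal_mul hd0, ENNReal.ofReal_mul (by positivity),
      ENNReal.ofReal_mul (by positivity), hVU, ENNReal.ofReal_rpow_of_pos hV,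
      ← ENNReal.ofReal_rpow_of_nonneg hB (by positivity)]
    gcongr
  have h2 : ∫⁻ z in U, ‖f x - f y‖ₑ ≤ ENNReal.ofReal (2 * A) := by
    calc ∫⁻ z in U, ‖f x - f y‖ₑ ≤ ∫⁻ z in U, (‖f z - f x‖ₑ + ‖f z - f y‖ₑ) := by
          refine lintegral_mono fun z => ?_
          have : f x - f y = (f z - f y) - (f z - f x) := by ring
          rw [this, add_comm]
          exact enorm_sub_le
      _ = (∫⁻ z in U, ‖f z - f x‖ₑ) + ∫⁻ z in U, ‖f z - f y‖ₑ :=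
          lintegral_add_left (by fun_prop) _
      _ ≤ ENNReal.ofReal A + ENNReal.ofReal A := add_le_add (h1 x hx) (h1 y hy)
      _ = _ := by rw [← ENNReal.ofReal_add hA0 hA0]; congr 1; ring
  rw [setLIntegral_const, hVU, ← ofReal_norm, ← ENNReal.ofReal_mul (norm_nonneg _),
    ENNReal.ofReal_le_ofReal_iff (by positivity), Real.norm_eq_abs] at h2
  have h3 : V ^ (1 - 1 / p) = V * V ^ (-(1 / p)) := by
    rw [sub_eq_add_neg, Real.rpow_add hV, Real.rpow_one]
  rw [hA, h3] at h2
  have : |f x - f y| * V ≤ 2 * (d * ((1 - N / p)⁻¹ * (B ^ (1 / p) * V ^ (-(1 / p))))) * V := by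
    refine h2.trans (le_of_eq ?_); ring
  exact le_of_mul_le_mul_right this hV

lemma aux_trunc (η : ℝ) (hη : 0 < η) : ∃ F : ℝ → ℝ, ContDiff ℝ (⊤ : ℕ∞) F ∧ F 0 = 0 ∧
    (∀ x, 1 ≤ x → 1 ≤ F x) ∧ (∀ x, F x ≤ 1 + η) ∧ ∀ x, |deriv F x| ≤ 1 := by
  set h : ℝ → ℝ := fun x => 1 - Real.smoothTransition ((x - 1) / η) with hh
  have hcd : ContDiff ℝ (⊤ : ℕ∞) h :=
    contDiff_const.sub (Real.smoothTransition.contDiff.comp (by fun_prop))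
  have hc : Continuous h := hcd.continuous
  have h0 : ∀ x, 0 ≤ h x := fun x => by
    have := Real.smoothTransition.le_one ((x - 1) / η); simp only [hh]; linarith
  have h1 : ∀ x, h x ≤ 1 := fun x => by
    have := Real.smoothTransition.nonneg ((x - 1) / η); simp only [hh]; linarith
  have hone : ∀ x, x ≤ 1 → h x = 1 := fun x hx => by
    simp only [hh]
    rw [Real.smoothTransition.zero_of_nonpos (div_nonpos_of_nonpos_of_nonneg (by linarith) hη.le)]
    ring
  have hzero : ∀ x, 1 + η ≤ x → h x = 0 := fun x hx => by
    simp only [hh]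
    rw [Real.smoothTransition.one_of_one_le (by rw [le_div_iff₀ hη]; linarith)]
    ring
  set F : ℝ → ℝ := fun x => ∫ s in (0:ℝ)..x, h s with hF
  have hd : ∀ x, HasDerivAt F (h x) x := fun x =>
    intervalIntegral.integral_hasDerivAt_right (hc.intervalIntegrable _ _)
      (hc.stronglyMeasurableAtFilter _ _) hc.continuousAt
  have hderiv : deriv F = h := funext fun x => (hd x).deriv
  have hmono : Monotone F := monotone_of_deriv_nonneg (fun x => (hd x).differentiableAt)
    (fun x => by rw [hderiv]; exact h0 x)
  have hF0 : F 0 = 0 := by simp [hF]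
  have hF1 : F 1 = 1 := by
    have : F 1 = ∫ s in (0:ℝ)..1, (1:ℝ) := by
      apply intervalIntegral.integral_congr
      intro s hs
      rw [Set.uIcc_of_le zero_le_one] at hs
      exact hone s hs.2
    rw [this]; simp
  refine ⟨F, ?_, hF0, fun x hx => hF1 ▸ hmono hx, fun x => ?_, fun x => ?_⟩
  · rw [contDiff_infty_iff_deriv]
    exact ⟨fun x => (hd x).differentiableAt, hderiv ▸ hcd⟩
  · have hg : Monotone (fun x => x - F x) := by
      apply monotone_of_deriv_nonneg
      · exact fun x => ((hasDerivAt_id x).sub (hd x)).differentiableAt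
      · intro x
        rw [((hasDerivAt_id' x).fun_sub (hd x)).deriv]
        linarith [h1 x]
    have hb : F (1 + η) ≤ 1 + η := by
      have := hg (show (0:ℝ) ≤ 1 + η by linarith)
      simp only [hF0] at this; linarith
    rcases le_total x (1 + η) with hx | hx
    · exact (hmono hx).trans hb
    · have : F x = F (1 + η) + ∫ s in (1 + η)..x, h s := by
        rw [hF]
        exact (intervalIntegral.integral_add_adjacent_intervals (hc.intervalIntegrable _ _)
          (hc.intervalIntegrable _ _)).symm
      have h2 : ∫ s in (1 + η)..x, h s = ∫ s in (1 + η)..x, (0:ℝ) := by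
        apply intervalIntegral.integral_congr
        intro s hs
        rw [Set.uIcc_of_le hx] at hs
        exact hzero s hs.1
      rw [this, h2]; simpa using hb
  · rw [hderiv, abs_of_nonneg (h0 x)]; exact h1 x

lemma aux_bump {N : ℕ} (K O : Set (EuclideanSpace ℝ (Fin N))) (hK : IsCompact K) (hO : IsOpen O)
    (hKO : K ⊆ O) : ∃ θ : EuclideanSpace ℝ (Fin N) → ℝ, ContDiff ℝ (⊤ : ℕ∞) θ ∧
      HasCompactSupport θ ∧ tsupport θ ⊆ O ∧ (∀ x ∈ K, θ x = 1) ∧ ∀ x, 0 ≤ θ x ∧ θ x ≤ 1 := by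
  obtain ⟨η, hη, hsub⟩ := hK.exists_cthickening_subset_open hO hKO
  obtain ⟨f, hf0, hf1, hf⟩ := exists_contMDiffMap_zero_one_of_isClosed
    (modelWithCornersSelf ℝ (EuclideanSpace ℝ (Fin N))) (n := (⊤ : ℕ∞))
    (s := (Metric.thickening η K)ᶜ) (t := K) Metric.isOpen_thickening.isClosed_compl hK.isClosed
    (by
      rw [Set.disjoint_compl_left_iff_subset]
      exact Metric.self_subset_thickening hη K)
  have hs : tsupport f ⊆ Metric.cthickening η K := by
    apply closure_minimal _ Metric.isClosed_cthickening
    intro x hx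
    by_contra hcon
    exact hx (hf0 (fun hm => hcon (Metric.thickening_subset_cthickening _ _ hm)))
  refine ⟨f, f.contMDiff.contDiff, ?_, hs.trans hsub, fun x hx => hf1 hx, fun x => hf x⟩
  exact HasCompactSupport.of_support_subset_isCompact hK.cthickening ((subset_tsupport _).trans hs)

lemma aux_geom {N : ℕ} (hN : 2 ≤ N) (R : ℝ)
    (S : Finset (EuclideanSpace ℝ (Fin N)))
    (a : EuclideanSpace ℝ (Fin N)) (ha : a ∉ S) (haR : ‖a‖ < R) :
    ∃ z : EuclideanSpace ℝ (Fin N), ‖z‖ = R ∧ ∀ s ∈ S, s ∉ segment ℝ a z := by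
  obtain ⟨f, hf⟩ := Module.exists_dual_forall_apply_ne_zero (K := ℝ)
    (fun s : S => (s : EuclideanSpace ℝ (Fin N)) - a) (by
      rintro ⟨s, hs⟩ h
      exact ha ((sub_eq_zero.1 h) ▸ hs))
  obtain ⟨e, he, he0⟩ : ∃ e, f e = 0 ∧ e ≠ 0 := by
    have hk : LinearMap.ker f ≠ ⊥ := by
      apply LinearMap.ker_ne_bot_of_finrank_lt
      simp; omega
    obtain ⟨e, h1, h2⟩ := (Submodule.ne_bot_iff _).1 hk
    exact ⟨e, h1, h2⟩
  have hcont : Continuous (fun t : ℝ => ‖a + t • e‖) := by fun_prop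
  have hen : 0 < ‖e‖ := norm_pos_iff.2 he0
  obtain ⟨t, -, ht⟩ : ∃ t ∈ Set.Icc (0:ℝ) ((R + ‖a‖) / ‖e‖), ‖a + t • e‖ = R := by
    apply intermediate_value_Icc _ hcont.continuousOn
    · constructor
      · simpa using haR.le
      · have h2 := norm_sub_norm_le (((R + ‖a‖) / ‖e‖) • e) (-a)
        have h3 : 0 ≤ (R + ‖a‖) / ‖e‖ :=
          div_nonneg (by linarith [norm_nonneg a]) hen.le
        rw [norm_smul, Real.norm_eq_abs, abs_of_nonneg h3, div_mul_cancel₀ _ hen.ne',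
          norm_neg, sub_neg_eq_add, add_comm (_ • e)] at h2
        simpa using h2
    · have := norm_nonneg a
      apply div_nonneg _ hen.le
      linarith
  refine ⟨a + t • e, ht, fun s hs hmem => hf ⟨s, hs⟩ ?_⟩
  rw [segment_eq_image'] at hmem
  obtain ⟨r, -, rfl⟩ := hmem
  simp [he]

lemma aux_conv {V : Type*} [NormedAddCommGroup V] [NormedSpace ℝ V] (A B : V) (s p : ℝ)
    (hs : 0 ≤ s) (hs1 : s ≤ 1) (hp : 1 ≤ p) :
    ‖(1 - s) • A + s • B‖ ^ p ≤ (1 - s) * ‖A‖ ^ p + s * ‖B‖ ^ p := by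
  have h1 : ‖(1 - s) • A + s • B‖ ≤ (1 - s) * ‖A‖ + s * ‖B‖ := by
    refine (norm_add_le _ _).trans ?_
    rw [norm_smul, norm_smul, Real.norm_of_nonneg hs, Real.norm_of_nonneg (sub_nonneg.2 hs1)]
  refine (Real.rpow_le_rpow (norm_nonneg _) h1 (by linarith)).trans ?_
  exact (convexOn_rpow hp).2 (norm_nonneg A) (norm_nonneg B) (sub_nonneg.2 hs1) hs (by ring)

lemma aux_pt {V : Type*} [NormedAddCommGroup V] [NormedSpace ℝ V] (A B : V) (p t θ w : ℝ) (m : ℕ)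
    (hp : 2 ≤ p) (hm : p ≤ m) (ht : 0 ≤ t) (hw : 0 < w) (hθ : 0 ≤ θ) (hθ1 : θ ≤ 1)
    (hs1 : t * (p - 1) * w ^ (-p) ≤ 1) :
    ‖(1 - t * (p - 1) * θ ^ m * w ^ (-p)) • A - (t * m * θ ^ (m - 1) * w ^ (1 - p)) • B‖ ^ p ≤
      ‖A‖ ^ p - t * (p - 1) * (θ ^ m * (w⁻¹ * ‖A‖) ^ p)
        + t * (p - 1) * (m / (p - 1)) ^ p * ‖B‖ ^ p := by
  have hm2 : 2 ≤ m := by exact_mod_cast hp.trans hm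
  have hp1 : 0 < p - 1 := by linarith
  set s := t * (p - 1) * θ ^ m * w ^ (-p) with hs
  have hs0 : 0 ≤ s := by positivity
  have hs1' : s ≤ 1 := by
    refine le_trans ?_ hs1
    have : θ ^ m ≤ 1 := pow_le_one₀ hθ hθ1
    calc s = (t * (p - 1) * w ^ (-p)) * θ ^ m := by rw [hs]; ring
      _ ≤ (t * (p - 1) * w ^ (-p)) * 1 := by gcongr
      _ = _ := by ring
  have hwp : w ^ (1 - p) = w * w ^ (-p) := by
    rw [sub_eq_add_neg, Real.rpow_add hw, Real.rpow_one]
  have h1 : (1 - s) • A - (t * m * θ ^ (m - 1) * w ^ (1 - p)) • B =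
      (1 - s) • A + s • ((-(m * w / ((p - 1) * θ))) • B) := by
    rw [sub_eq_add_neg, smul_smul, ← neg_smul]
    congr 2
    rcases hθ.eq_or_lt with h | h
    · subst_vars
      have : m - 1 ≠ 0 := by omega
      simp [this]
    · have : θ ^ m = θ ^ (m - 1) * θ := by rw [← pow_succ]; congr 1; omega
      rw [hs, hwp, this]
      field_simp
  rw [h1]
  refine (aux_conv _ _ s p hs0 hs1' (by linarith)).trans ?_
  have h2 : s * ‖A‖ ^ p = t * (p - 1) * (θ ^ m * (w⁻¹ * ‖A‖) ^ p) := by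
    rw [Real.mul_rpow (by positivity) (norm_nonneg _), Real.inv_rpow hw.le, ← Real.rpow_neg hw.le,
      hs]; ring
  have h3 : s * ‖(-(m * w / ((p - 1) * θ))) • B‖ ^ p ≤
      t * (p - 1) * (m / (p - 1)) ^ p * ‖B‖ ^ p := by
    rw [norm_smul, norm_neg, Real.norm_of_nonneg (by positivity),
      Real.mul_rpow (by positivity) (norm_nonneg _), ← mul_assoc]
    refine mul_le_mul_of_nonneg_right ?_ (by positivity)
    rcases hθ.eq_or_lt with h | h
    · have : m ≠ 0 := by omega
      have : s = 0 := by rw [hs, ← h]; simp [this]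
      rw [this, zero_mul]; positivity
    · have e1 : m * w / ((p - 1) * θ) = (m / (p - 1)) * (w * θ⁻¹) := by field_simp
      rw [e1, Real.mul_rpow (by positivity) (by positivity),
        Real.mul_rpow hw.le (by positivity), hs, Real.inv_rpow hθ]
      have e2 : w ^ (-p) * w ^ p = 1 := by rw [← Real.rpow_add hw]; simp
      have e3 : θ ^ m * (θ ^ p)⁻¹ ≤ 1 := by
        rw [← Real.rpow_natCast, ← div_eq_mul_inv, div_le_one (by positivity)]
        exact Real.rpow_le_rpow_of_exponent_ge h hθ1 hm
      calc t * (p - 1) * θ ^ m * w ^ (-p) * ((m / (p - 1)) ^ p * (w ^ p * (θ ^ p)⁻¹))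
          = t * (p - 1) * (m / (p - 1)) ^ p * (w ^ (-p) * w ^ p) * (θ ^ m * (θ ^ p)⁻¹) := by ring
        _ ≤ t * (p - 1) * (m / (p - 1)) ^ p * (w ^ (-p) * w ^ p) * 1 := by gcongr
        _ = _ := by rw [e2]; ring
  linarith

lemma aux_int {N : ℕ} (p : ℝ) (hp : 0 < p) (φ : EuclideanSpace ℝ (Fin N) → ℝ)
    (hφ : ContDiff ℝ (⊤ : ℕ∞) φ) (hc : HasCompactSupport φ) :
    Integrable (fun x => ‖fderiv ℝ φ x‖ ^ p) := by
  have h1 : Continuous (fderiv ℝ φ) := hφ.continuous_fderiv (by simp)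
  apply Continuous.integrable_of_hasCompactSupport
  · exact h1.norm.rpow_const (fun _ => Or.inr hp.le)
  · exact (hc.fderiv (𝕜 := ℝ)).comp_left (g := fun v => ‖v‖ ^ p) (by simp [hp.ne'])

lemma aux_var {N : ℕ} (p ε t : ℝ) (m : ℕ) (hp : 2 ≤ p) (hm : p ≤ m) (hε : 0 < ε) (ht : 0 ≤ t)
    (htε : t * (p - 1) * (ε / 2) ^ (-p) ≤ 1)
    (φ θ : EuclideanSpace ℝ (Fin N) → ℝ)
    (hφ : ContDiff ℝ (⊤ : ℕ∞) φ) (hφc : HasCompactSupport φ) (hφε : ∀ x, φ x ≤ 1 + ε / 2)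
    (hθ : ContDiff ℝ (⊤ : ℕ∞) θ) (hθc : HasCompactSupport θ) (hθ1 : ∀ x, 0 ≤ θ x ∧ θ x ≤ 1) :
    ∃ ψ : EuclideanSpace ℝ (Fin N) → ℝ, ContDiff ℝ (⊤ : ℕ∞) ψ ∧ HasCompactSupport ψ ∧
      tsupport ψ ⊆ tsupport φ ∪ tsupport θ ∧ (∀ x, θ x = 0 → ψ x = φ x) ∧
      Integrable (fun x => θ x ^ m * ‖fderiv ℝ (fun y => Real.log (1 + ε - φ y)) x‖ ^ p) ∧
      ∫ x, ‖fderiv ℝ ψ x‖ ^ p ≤ (∫ x, ‖fderiv ℝ φ x‖ ^ p)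
        - t * (p - 1) * (∫ x, θ x ^ m * ‖fderiv ℝ (fun y => Real.log (1 + ε - φ y)) x‖ ^ p)
        + t * (p - 1) * (m / (p - 1)) ^ p * ∫ x, ‖fderiv ℝ θ x‖ ^ p := by
  have hm2 : 2 ≤ m := by exact_mod_cast hp.trans hm
  have hm0 : m ≠ 0 := by omega
  have hw : ∀ x, ε / 2 ≤ 1 + ε - φ x := fun x => by linarith [hφε x]
  have hw0 : ∀ x, 0 < 1 + ε - φ x := fun x => by linarith [hw x]
  have hwd : ContDiff ℝ (⊤ : ℕ∞) (fun x => 1 + ε - φ x) := contDiff_const.sub hφ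
  have hdφ : Differentiable ℝ φ := hφ.differentiable (by simp)
  have hdθ : Differentiable ℝ θ := hθ.differentiable (by simp)
  have hww : ∀ x, HasFDerivAt (fun x => 1 + ε - φ x) (-fderiv ℝ φ x) x := fun x =>
    (hdφ x).hasFDerivAt.const_sub _
  have hlog : ∀ x, fderiv ℝ (fun y => Real.log (1 + ε - φ y)) x
      = (1 + ε - φ x)⁻¹ • (-fderiv ℝ φ x) := fun x => ((hww x).log (hw0 x).ne').fderiv
  have hlogn : ∀ x, ‖fderiv ℝ (fun y => Real.log (1 + ε - φ y)) x‖
      = (1 + ε - φ x)⁻¹ * ‖fderiv ℝ φ x‖ := fun x => by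
    rw [hlog, norm_smul, norm_neg, Real.norm_of_nonneg (inv_nonneg.2 (hw0 x).le)]
  have hlogd : ContDiff ℝ (⊤ : ℕ∞) (fun y => Real.log (1 + ε - φ y)) :=
    hwd.log fun x => (hw0 x).ne'
  have hlogc : Continuous (fderiv ℝ (fun y => Real.log (1 + ε - φ y))) :=
    hlogd.continuous_fderiv (by simp)
  set ψ : EuclideanSpace ℝ (Fin N) → ℝ :=
    fun x => φ x - t * (θ x ^ m * (1 + ε - φ x) ^ (1 - p)) with hψ
  have hψd : ContDiff ℝ (⊤ : ℕ∞) ψ := hφ.sub (contDiff_const.mul ((hθ.pow m).mul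
    (hwd.rpow_const_of_ne fun x => (hw0 x).ne')))
  have hsupp : tsupport ψ ⊆ tsupport φ ∪ tsupport θ := by
    apply closure_minimal _ ((isClosed_tsupport _).union (isClosed_tsupport _))
    intro x hx
    by_contra hcon
    rw [Set.mem_union, not_or] at hcon
    apply hx
    simp [hψ, image_eq_zero_of_notMem_tsupport hcon.1, image_eq_zero_of_notMem_tsupport hcon.2, hm0]
  have hψc : HasCompactSupport ψ :=
    (hφc.isCompact.union hθc.isCompact).of_isClosed_subset (isClosed_tsupport _) hsupp
  have hI : Integrable
      (fun x => θ x ^ m * ‖fderiv ℝ (fun y => Real.log (1 + ε - φ y)) x‖ ^ p) := by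
    apply Continuous.integrable_of_hasCompactSupport
    · exact (hθ.continuous.pow m).mul (hlogc.norm.rpow_const (fun _ => Or.inr (by linarith)))
    · exact (hθc.comp_left (g := fun v => v ^ m) (by simp [hm0])).mul_right
  refine ⟨ψ, hψd, hψc, hsupp, fun x hx => by simp [hψ, hx, hm0], hI, ?_⟩
  have hp0 : 0 < p := by linarith
  have i1 := aux_int p hp0 φ hφ hφc
  have i2 := aux_int p hp0 θ hθ hθc
  have i3 := aux_int p hp0 ψ hψd hψc
  rw [← integral_const_mul, ← integral_const_mul, ← integral_sub i1 (hI.const_mul _),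
    ← integral_add (f := fun a => ‖fderiv ℝ φ a‖ ^ p - t * (p - 1) *
      (θ a ^ m * ‖fderiv ℝ (fun y => Real.log (1 + ε - φ y)) a‖ ^ p))
      (i1.sub (hI.const_mul _)) (i2.const_mul _)]
  refine integral_mono i3 ((i1.sub (hI.const_mul _)).add (i2.const_mul _)) fun x => ?_
  have hder : fderiv ℝ ψ x = (1 - t * (p - 1) * θ x ^ m * (1 + ε - φ x) ^ (-p)) • fderiv ℝ φ x
      - (t * m * θ x ^ (m - 1) * (1 + ε - φ x) ^ (1 - p)) • fderiv ℝ θ x := by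
    have h1 := (hww x).rpow_const (p := 1 - p) (Or.inl (hw0 x).ne')
    have h2 := (hdθ x).hasFDerivAt.pow m
    have h3 := (hdφ x).hasFDerivAt.fun_sub ((h2.fun_mul h1).const_mul t)
    rw [h3.fderiv]
    have : 1 - p - 1 = -p := by ring
    rw [this]
    ext v
    simp
    ring
  have hs1 : t * (p - 1) * (1 + ε - φ x) ^ (-p) ≤ 1 := by
    refine le_trans ?_ htε
    have : 0 ≤ p - 1 := by linarith
    gcongr t * (p - 1) * ?_
    exact Real.rpow_le_rpow_of_nonpos (by positivity) (hw x) (by linarith)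
  have := aux_pt (fderiv ℝ φ x) (fderiv ℝ θ x) p t (θ x) (1 + ε - φ x) m hp hm ht (hw0 x)
    (hθ1 x).1 (hθ1 x).2 hs1
  simp only [hlogn, hder]
  exact this

lemma aux_energy {N : ℕ} (p : ℝ) (hp : 0 < p) (φ : EuclideanSpace ℝ (Fin N) → ℝ)
    (hφ : ContDiff ℝ (⊤ : ℕ∞) φ) (hc : HasCompactSupport φ) (B : ℝ)
    (hB : ∫ x, ‖fderiv ℝ φ x‖ ^ p ≤ B) (U : Set (EuclideanSpace ℝ (Fin N))) :
    ∫⁻ x in U, ‖fderiv ℝ φ x‖ₑ ^ p ≤ ENNReal.ofReal B := by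
  refine (setLIntegral_le_lintegral _ _).trans ?_
  refine le_trans (le_of_eq ?_) (ENNReal.ofReal_le_ofReal hB)
  rw [ofReal_integral_eq_lintegral_ofReal (aux_int p hp φ hφ hc)
    (Filter.Eventually.of_forall fun x => by positivity)]
  refine lintegral_congr fun x => ?_
  rw [← ofReal_norm, ENNReal.ofReal_rpow_of_nonneg (norm_nonneg _) hp.le]

lemma aux_boundary {N : ℕ} (p : ℝ) (hN : 2 ≤ N) (hp : (N:ℝ) < p) (B : ℝ) (hB : 0 ≤ B) :
    ∃ r : ℝ, 0 < r ∧ ∀ φ : EuclideanSpace ℝ (Fin N) → ℝ, ContDiff ℝ (⊤ : ℕ∞) φ →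
      HasCompactSupport φ → ∫ x, ‖fderiv ℝ φ x‖ ^ p ≤ B →
      ∀ z y, y ∈ Metric.ball z r → |φ z - φ y| ≤ 1 / 2 := by
  have hN' : (2:ℝ) ≤ N := by exact_mod_cast hN
  have hp0 : 0 < p := by linarith
  have hlt : (N:ℝ) / p < 1 := by rw [div_lt_one hp0]; exact hp
  have hpos : 0 < 1 - (N:ℝ) / p := by linarith
  have : Nonempty (Fin N) := ⟨⟨0, by omega⟩⟩
  set v := (volume (Metric.ball (0 : EuclideanSpace ℝ (Fin N)) 1)).toReal with hv
  have hvf : volume (Metric.ball (0 : EuclideanSpace ℝ (Fin N)) 1) ≠ ⊤ :=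
    Metric.isBounded_ball.measure_lt_top.ne
  have hv0 : 0 < v := ENNReal.toReal_pos (Metric.measure_ball_pos _ _ one_pos).ne' hvf
  set k := 2 * (2 * ((1 - N / p)⁻¹ * (B ^ (1 / p) * v ^ (-(1 / p))))) with hk
  have hk0 : 0 ≤ k := by positivity
  set r := (1 / (2 * (k + 1))) ^ (1 - (N:ℝ) / p)⁻¹ with hr
  have hr0 : 0 < r := by positivity
  refine ⟨r, hr0, fun φ hφ hφc hφB z y hy => ?_⟩
  have h := aux_morrey2 p hN hp (Metric.ball z r) measurableSet_ball (convex_ball _ _) (2 * r)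
    (by
      intro x hx y hy
      rw [Metric.mem_ball] at hx hy
      rw [← dist_eq_norm]
      linarith [dist_triangle_right y x z]) (r ^ N * v) (by positivity)
    (by
      rw [Measure.addHaar_ball _ _ hr0.le, finrank_euclideanSpace_fin,
        ENNReal.ofReal_mul (by positivity), hv, ENNReal.ofReal_toReal hvf])
    φ (hφ.of_le (by exact_mod_cast le_top)) B hB (aux_energy p hp0 φ hφ hφc B hφB _) z
      (Metric.mem_ball_self hr0) y hy
  refine h.trans ?_
  have e1 : (r ^ N * v) ^ (-(1 / p)) = r ^ (-((N:ℝ) / p)) * v ^ (-(1 / p)) := by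
    rw [Real.mul_rpow (by positivity) hv0.le, ← Real.rpow_natCast, ← Real.rpow_mul hr0.le]
    congr 2; ring
  have e2 : r * r ^ (-((N:ℝ) / p)) = 1 / (2 * (k + 1)) := by
    rw [← Real.rpow_one_add' hr0.le (by linarith), ← sub_eq_add_neg, hr,
      ← Real.rpow_mul (by positivity), inv_mul_cancel₀ hpos.ne', Real.rpow_one]
  calc _ = k * (r * r ^ (-((N:ℝ) / p))) := by rw [e1, hk]; ring
    _ = k / (2 * (k + 1)) := by rw [e2]; ring
    _ ≤ 1 / 2 := by rw [div_le_div_iff₀ (by positivity) (by positivity)]; linarith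

theorem capacity_strict_mono_add_point (N : ℕ) (p R : ℝ)
    (hN : 2 ≤ N) (hp : (N:ℝ) < p) (hR : 0 < R)
    (S : Finset (EuclideanSpace ℝ (Fin N))) (hS : S.Nonempty)
    (a : EuclideanSpace ℝ (Fin N)) (ha : a ∉ S)
    (hsub : (↑S : Set (EuclideanSpace ℝ (Fin N))) ∪ {a} ⊆ Metric.ball 0 R) :
    pCapacity p (S : Set (EuclideanSpace ℝ (Fin N))) (Metric.ball 0 R) <
      pCapacity p ((↑S : Set (EuclideanSpace ℝ (Fin N))) ∪ {a}) (Metric.ball 0 R) := by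
  by_contra hcon
  rw [not_lt] at hcon
  have hN' : (2:ℝ) ≤ N := by exact_mod_cast hN
  have hp0 : 0 < p := by linarith
  have hp2 : 2 ≤ p := by linarith
  have hp1 : 0 < p - 1 := by linarith
  have hlt : (N:ℝ) / p < 1 := by rw [div_lt_one hp0]; exact hp
  have hpos : 0 < 1 - (N:ℝ) / p := by linarith
  set c := pCapacity p (S : Set (EuclideanSpace ℝ (Fin N))) (Metric.ball 0 R) with hc
  have hc0 : 0 ≤ c := by
    apply Real.sInf_nonneg
    rintro _ ⟨φ, -, -, -, -, rfl⟩
    exact integral_nonneg fun x => by positivity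
  have hlow : ∀ ψ : EuclideanSpace ℝ (Fin N) → ℝ, ContDiff ℝ (⊤ : ℕ∞) ψ → HasCompactSupport ψ →
      tsupport ψ ⊆ Metric.ball 0 R → (∀ x ∈ S, 1 ≤ ψ x) → c ≤ ∫ x, ‖fderiv ℝ ψ x‖ ^ p := by
    intro ψ h1 h2 h3 h4
    refine csInf_le ⟨0, ?_⟩ ⟨ψ, h1, h2, h3, h4, rfl⟩
    rintro _ ⟨φ, -, -, -, -, rfl⟩
    exact integral_nonneg fun x => by positivity
  have hex : ∀ δ > 0, ∃ φ : EuclideanSpace ℝ (Fin N) → ℝ, ContDiff ℝ (⊤ : ℕ∞) φ ∧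
      HasCompactSupport φ ∧ tsupport φ ⊆ Metric.ball 0 R ∧ (∀ x ∈ S, 1 ≤ φ x) ∧ 1 ≤ φ a ∧
      ∫ x, ‖fderiv ℝ φ x‖ ^ p < c + δ := by
    intro δ hδ
    have hne : {c : ℝ | ∃ φ : EuclideanSpace ℝ (Fin N) → ℝ, ContDiff ℝ (⊤ : ℕ∞) φ ∧
        HasCompactSupport φ ∧ tsupport φ ⊆ Metric.ball 0 R ∧
        (∀ x ∈ (↑S : Set (EuclideanSpace ℝ (Fin N))) ∪ {a}, 1 ≤ φ x) ∧
        c = ∫ x, ‖fderiv ℝ φ x‖ ^ p}.Nonempty := by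
      obtain ⟨θ, h1, h2, h3, h4, -⟩ := aux_bump ((↑S : Set (EuclideanSpace ℝ (Fin N))) ∪ {a})
        (Metric.ball 0 R) (S.finite_toSet.union (Set.finite_singleton a)).isCompact
        Metric.isOpen_ball hsub
      exact ⟨_, θ, h1, h2, h3, fun x hx => (h4 x hx).ge, rfl⟩
    obtain ⟨_, ⟨φ, h1, h2, h3, h4, rfl⟩, h5⟩ := exists_lt_of_csInf_lt hne
      (show sInf _ < c + δ from lt_of_le_of_lt hcon (by linarith))
    exact ⟨φ, h1, h2, h3, fun x hx => h4 x (Or.inl hx), h4 a (Or.inr rfl), h5⟩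
  have haR : ‖a‖ < R := by simpa using hsub (Or.inr rfl : a ∈ _)
  obtain ⟨z, hz, hzS⟩ := aux_geom hN R S a ha haR
  obtain ⟨r, hr, hbd⟩ := aux_boundary (N := N) p hN hp (c + 1) (by linarith)
  -- the point `y` close to the boundary
  obtain ⟨y, hyR, hyz, hyseg⟩ : ∃ y, ‖y‖ < R ∧ y ∈ Metric.ball z r ∧ y ∈ segment ℝ a z := by
    set τ := min 1 (r / (2 * (‖a - z‖ + 1))) with hτ
    have hτ0 : 0 < τ := by positivity
    have hτ1 : τ ≤ 1 := min_le_left _ _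
    refine ⟨τ • a + (1 - τ) • z, ?_, ?_, τ, 1 - τ, hτ0.le, by linarith, by ring, rfl⟩
    · refine (norm_add_le _ _).trans_lt ?_
      rw [norm_smul, norm_smul, hz, Real.norm_of_nonneg hτ0.le,
        Real.norm_of_nonneg (by linarith)]
      nlinarith
    · rw [Metric.mem_ball, dist_eq_norm]
      have : τ • a + (1 - τ) • z - z = τ • (a - z) := by module
      rw [this, norm_smul, Real.norm_of_nonneg hτ0.le]
      have h1 : τ ≤ r / (2 * (‖a - z‖ + 1)) := min_le_right _ _
      have h2 := norm_nonneg (a - z)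
      calc τ * ‖a - z‖ ≤ r / (2 * (‖a - z‖ + 1)) * ‖a - z‖ := by gcongr
        _ < r := by
          rw [div_mul_eq_mul_div, div_lt_iff₀ (by positivity)]
          nlinarith
  -- the tube
  set O : Set (EuclideanSpace ℝ (Fin N)) := Metric.ball 0 R \ S with hO
  have hOo : IsOpen O := Metric.isOpen_ball.sdiff S.finite_toSet.isClosed
  have hsegO : segment ℝ a y ⊆ O := by
    intro x hx
    refine ⟨(convex_ball (0 : EuclideanSpace ℝ (Fin N)) R).segment_subset (by simpa using haR)
      (by simpa using hyR) hx, fun hxS => hzS x hxS ?_⟩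
    exact (convex_segment a z).segment_subset (left_mem_segment ℝ a z) hyseg hx
  have hsegc : IsCompact (segment ℝ a y) := by
    rw [← convexHull_pair]
    exact (Set.toFinite {a, y}).isCompact_convexHull ℝ
  obtain ⟨δ₀, hδ₀, hδO⟩ := hsegc.exists_cthickening_subset_open hOo hsegO
  set U := Metric.thickening δ₀ (segment ℝ a y) with hU
  have hUK : U ⊆ Metric.cthickening δ₀ (segment ℝ a y) := Metric.thickening_subset_cthickening _ _
  have hUo : IsOpen U := Metric.isOpen_thickening
  have hUconv : Convex ℝ U := (convex_segment a y).thickening δ₀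
  have haU : a ∈ U := Metric.self_subset_thickening hδ₀ _ (left_mem_segment ℝ a y)
  have hyU : y ∈ U := Metric.self_subset_thickening hδ₀ _ (right_mem_segment ℝ a y)
  have hUR : U ⊆ Metric.ball 0 R := fun x hx => (hδO (hUK hx)).1
  have hUd : ∀ x ∈ U, ∀ y ∈ U, ‖y - x‖ ≤ 2 * R := by
    intro x hx y hy
    have h1 : ‖x‖ < R := by simpa using hUR hx
    have h2 : ‖y‖ < R := by simpa using hUR hy
    linarith [norm_sub_le y x]
  have hUf : volume U ≠ ⊤ := (Metric.isBounded_ball.subset hUR).measure_lt_top.ne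
  set V := (volume U).toReal with hV
  have hV0 : 0 < V := ENNReal.toReal_pos (hUo.measure_pos _ ⟨a, haU⟩).ne' hUf
  obtain ⟨θ, hθ, hθc, hθO, hθK, hθ1⟩ := aux_bump _ O hsegc.cthickening hOo hδO
  have hθS : ∀ x ∈ S, θ x = 0 := fun x hx =>
    image_eq_zero_of_notMem_tsupport fun h => (hθO h).2 hx
  -- constants
  set m := ⌈p⌉₊ with hm
  have hpm : p ≤ m := Nat.le_ceil p
  set K0 := (m / (p - 1)) ^ p * ∫ x, ‖fderiv ℝ θ x‖ ^ p with hK0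
  have hK00 : 0 ≤ K0 := mul_nonneg (by positivity) (integral_nonneg fun x => by positivity)
  set M := 2 * ((2 * R) * ((1 - N / p)⁻¹ * ((K0 + 1) ^ (1 / p) * V ^ (-(1 / p))))) with hM
  set ε := Real.exp (-M) / 4 with hε
  have hε0 : 0 < ε := by positivity
  set t := (ε / 2) ^ p / (p - 1) with ht
  have ht0 : 0 < t := by positivity
  have htp : t * (p - 1) * (ε / 2) ^ (-p) ≤ 1 := by
    rw [ht, div_mul_cancel₀ _ hp1.ne', ← Real.rpow_add (by positivity)]
    simp
  obtain ⟨φ₀, h1, h2, h3, h4, h5, h6⟩ := hex (min 1 (t * (p - 1))) (by positivity)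
  have h6a : ∫ x, ‖fderiv ℝ φ₀ x‖ ^ p ≤ c + 1 := h6.le.trans (by gcongr; exact min_le_left _ _)
  have h6b : ∫ x, ‖fderiv ℝ φ₀ x‖ ^ p ≤ c + t * (p - 1) :=
    h6.le.trans (by gcongr; exact min_le_right _ _)
  obtain ⟨F, hF, hF0, hF1, hFε, hF'⟩ := aux_trunc (ε / 2) (by positivity)
  set φ : EuclideanSpace ℝ (Fin N) → ℝ := fun x => F (φ₀ x) with hφ
  have hφd : ContDiff ℝ (⊤ : ℕ∞) φ := hF.comp h1
  have hφsupp : tsupport φ ⊆ tsupport φ₀ := by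
    apply closure_mono
    intro x hx hx0
    apply hx
    show F (φ₀ x) = 0
    rw [hx0, hF0]
  have hφc : HasCompactSupport φ := h2.comp_left (g := F) hF0
  have hJ : ∫ x, ‖fderiv ℝ φ x‖ ^ p ≤ ∫ x, ‖fderiv ℝ φ₀ x‖ ^ p := by
    refine integral_mono (aux_int p hp0 φ hφd hφc) (aux_int p hp0 φ₀ h1 h2) fun x => ?_
    have hd : fderiv ℝ φ x = deriv F (φ₀ x) • fderiv ℝ φ₀ x :=
      ((hF.differentiable (by simp) _).hasDerivAt.comp_hasFDerivAt x
        (h1.differentiable (by simp) x).hasFDerivAt).fderiv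
    simp only [hd, norm_smul, Real.norm_eq_abs]
    refine Real.rpow_le_rpow (by positivity) ?_ hp0.le
    exact mul_le_of_le_one_left (norm_nonneg _) (hF' _)
  have hφa : 1 ≤ φ a := hF1 _ h5
  have hφS : ∀ x ∈ S, 1 ≤ φ x := fun x hx => hF1 _ (h4 x hx)
  have hφε : ∀ x, φ x ≤ 1 + ε / 2 := fun x => hFε _
  have hφy : φ y ≤ 1 / 2 := by
    have h := hbd φ hφd hφc (hJ.trans h6a) z y hyz
    have hz0 : φ z = 0 := image_eq_zero_of_notMem_tsupport fun h => by
      have := h3 (hφsupp h)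
      simp [hz] at this
    rw [hz0] at h
    have := (abs_le.1 h).1
    linarith
  obtain ⟨ψ, q1, q2, q3, q4, q5, q6⟩ := aux_var p ε t m hp2 hpm hε0 ht0.le htp φ θ hφd hφc hφε
    hθ hθc hθ1
  have hcψ := hlow ψ q1 q2 (q3.trans (Set.union_subset (hφsupp.trans h3)
    (fun x hx => (hθO hx).1))) (fun x hx => by rw [q4 x (hθS x hx)]; exact hφS x hx)
  set f : EuclideanSpace ℝ (Fin N) → ℝ := fun y => Real.log (1 + ε - φ y) with hf
  have hfI : ∫ x, θ x ^ m * ‖fderiv ℝ f x‖ ^ p ≤ K0 + 1 := by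
    have hA : t * (p - 1) * (∫ x, θ x ^ m * ‖fderiv ℝ f x‖ ^ p) ≤ t * (p - 1) * (K0 + 1) := by
      have : t * (p - 1) * (K0 + 1) = t * (p - 1) * (m / (p - 1)) ^ p * (∫ x, ‖fderiv ℝ θ x‖ ^ p)
        + t * (p - 1) := by rw [hK0]; ring
      linarith
    exact le_of_mul_le_mul_left hA (by positivity)
  have hw0 : ∀ x, 0 < 1 + ε - φ x := fun x => by linarith [hφε x]
  have hfd : ContDiff ℝ 1 f :=
    ((contDiff_const.sub hφd).log fun x => (hw0 x).ne').of_le (by exact_mod_cast le_top)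
  have hfU : ∫⁻ x in U, ‖fderiv ℝ f x‖ₑ ^ p ≤ ENNReal.ofReal (K0 + 1) := by
    refine le_trans ?_ (ENNReal.ofReal_le_ofReal hfI)
    rw [ofReal_integral_eq_lintegral_ofReal q5
      (Filter.Eventually.of_forall fun x => mul_nonneg (pow_nonneg (hθ1 x).1 _) (by positivity))]
    refine le_trans ?_ (setLIntegral_le_lintegral U _)
    refine lintegral_mono_ae ?_
    filter_upwards [ae_restrict_mem hUo.measurableSet] with x hx
    rw [hθK x (hUK hx), one_pow, one_mul, ← ofReal_norm,
      ENNReal.ofReal_rpow_of_nonneg (norm_nonneg _) hp0.le]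
  have hfin := aux_morrey2 p hN hp U hUo.measurableSet hUconv (2 * R) hUd V hV0
    (ENNReal.ofReal_toReal hUf).symm f hfd (K0 + 1) (by linarith) hfU a haU y hyU
  have hfa : f a ≤ -M - 2 * Real.log 2 := by
    have : Real.log ε = -M - 2 * Real.log 2 := by
      rw [hε, Real.log_div (Real.exp_pos _).ne' (by norm_num), Real.log_exp,
        show (4:ℝ) = 2 ^ 2 by norm_num, Real.log_pow]
      norm_num
    rw [← this]
    exact Real.log_le_log (hw0 a) (by linarith)
  have hfy : -Real.log 2 ≤ f y := by
    rw [← Real.log_inv]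
    exact Real.log_le_log (by norm_num) (by linarith)
  have hl2 : 0 < Real.log 2 := Real.log_pos (by norm_num)
  have := (abs_le.1 hfin).1
  rw [← hM] at this
  linarith
end
end

section
/- Let 1 < p < N, let Ω = ℝ^{N-1}×(−1,1) ⊆ ℝ^N be the open slab, and let 0 < γ < 1. Then the (p,γ)-capacitary inradius of Ω is finite: R_{p,γ}(Ω) < +∞. -/
open MeasureTheory Filter
open scoped ENNReal

noncomputable section

/-- `closedBall x₀ r \ Ω` is `(p,γ)`-negligible. -/
def IsNegligible {N : ℕ} (p γ : ℝ) (Ω : Set (EuclideanSpace ℝ (Fin N)))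
    (x₀ : EuclideanSpace ℝ (Fin N)) (r : ℝ) : Prop :=
  pCapacity p (Metric.closedBall x₀ r \ Ω) (Metric.ball x₀ (2*r)) ≤
    γ * pCapacity p (Metric.closedBall x₀ r) (Metric.ball x₀ (2*r))

/-- The `(p,γ)`-capacitary inradius of an open set, as an extended nonnegative real. -/
noncomputable def capInradius {N : ℕ} (p γ : ℝ) (Ω : Set (EuclideanSpace ℝ (Fin N))) : ℝ≥0∞ :=
  sSup {ρ : ℝ≥0∞ | ∃ r : ℝ, 0 < r ∧ ρ = ENNReal.ofReal r ∧
    ∃ x₀ : EuclideanSpace ℝ (Fin N), IsNegligible p γ Ω x₀ r}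

section Helpers
open Set Metric

/-- Polar coordinates for the lower integral. -/
theorem lintegral_polar {E : Type*} [NormedAddCommGroup E] [NormedSpace ℝ E] [FiniteDimensional ℝ E]
    [MeasurableSpace E] [BorelSpace E] [Nontrivial E] (μ : Measure E) [μ.IsAddHaarMeasure]
    (h : E → ℝ≥0∞) (hm : Measurable h) :
    ∫⁻ x, h x ∂μ = ∫⁻ θ : sphere (0 : E) 1, (∫⁻ t in Ioi (0:ℝ),
      ENNReal.ofReal (t ^ (Module.finrank ℝ E - 1)) * h (t • (θ : E))) ∂μ.toSphere := by
  have hmp := μ.measurePreserving_homeomorphUnitSphereProd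
  have hsymm := hmp.symm (homeomorphUnitSphereProd E).toMeasurableEquiv
  rw [← Measure.restrict_univ (μ := μ), ← Measure.restrict_univ (μ := μ)]
  have h1 : ∫⁻ x, h x ∂μ = ∫⁻ x : ({0}ᶜ : Set E), h x ∂(μ.comap (↑)) := by
    rw [lintegral_subtype_comap (measurableSet_singleton (0:E)).compl,
      restrict_compl_singleton]
  simp only [Measure.restrict_univ]
  rw [h1]
  rw [← hsymm.lintegral_comp_emb (homeomorphUnitSphereProd E).symm.measurableEmbedding]
  have hme : Measurable (fun q : sphere (0 : E) 1 × Ioi (0:ℝ) => h ((q.2 : ℝ) • (q.1 : E))) := by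
    apply hm.comp
    fun_prop
  have : ∀ q : sphere (0 : E) 1 × Ioi (0:ℝ),
      h ↑((homeomorphUnitSphereProd E).toMeasurableEquiv.symm q) = h ((q.2 : ℝ) • (q.1 : E)) := by
    intro q
    rfl
  simp only [this]
  rw [lintegral_prod _ hme.aemeasurable]
  refine lintegral_congr fun θ => ?_
  rw [Measure.volumeIoiPow, lintegral_withDensity_eq_lintegral_mul _ (by fun_prop)
    (by apply hm.comp; fun_prop)]
  rw [← lintegral_subtype_comap measurableSet_Ioi]
  rfl

theorem exists_trunc (L : ℝ) (hL : 1 < L) : ∃ H : ℝ → ℝ, ContDiff ℝ (⊤ : ℕ∞) H ∧ H 0 = 0 ∧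
    (∃ b < 1, ∀ t, b ≤ t → H t = 1) ∧ ∀ t, |deriv H t| ≤ L := by
  have hL0 : 0 < L := by linarith
  set b1 := L⁻¹ with hb1
  have hb1' : b1 < 1 := inv_lt_one_of_one_lt₀ hL
  have hb10 : 0 < b1 := inv_pos.2 hL0
  set b2 := (b1 + 1)/2 with hb2
  set d := b2 - b1 with hd
  have hd0 : 0 < d := by rw [hd, hb2]; linarith
  set χ : ℝ → ℝ := fun s => Real.smoothTransition ((b2 - s)/d) with hχ
  have hχc : ContDiff ℝ (⊤ : ℕ∞) χ := by
    apply Real.smoothTransition.contDiff.comp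
    fun_prop
  have hχcont : Continuous χ := hχc.continuous
  set G : ℝ → ℝ := fun t => ∫ s in (0:ℝ)..t, χ s with hG
  have hder : ∀ t, HasDerivAt G (χ t) t := fun t =>
    intervalIntegral.integral_hasDerivAt_right (hχcont.intervalIntegrable _ _)
      (hχcont.stronglyMeasurableAtFilter _ _) hχcont.continuousAt
  have hdG : deriv G = χ := funext fun t => (hder t).deriv
  have hGc : ContDiff ℝ (⊤ : ℕ∞) G := by
    refine contDiff_infty_iff_deriv.2 ⟨fun t => (hder t).differentiableAt, ?_⟩
    rw [hdG]; exact hχc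
  have hGb1 : G b1 = b1 := by
    have : G b1 = ∫ s in (0:ℝ)..b1, (1:ℝ) := by
      refine intervalIntegral.integral_congr fun s hs => ?_
      rw [uIcc_of_le hb10.le] at hs
      apply Real.smoothTransition.one_of_one_le
      rw [le_div_iff₀ hd0]; have := hs.2; rw [hd]; linarith
    rw [this]; simp
  have hmono : Monotone G := by
    apply monotone_of_deriv_nonneg (fun t => (hder t).differentiableAt)
    intro t; rw [hdG]; exact Real.smoothTransition.nonneg _
  have hk : b1 ≤ G b2 := by
    have := hmono (show b1 ≤ b2 by rw [hb2]; linarith)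
    rwa [hGb1] at this
  have hk0 : 0 < G b2 := hb10.trans_le hk
  have hconst : ∀ t, b2 ≤ t → G t = G b2 := by
    intro t ht
    have : G t - G b2 = ∫ s in b2..t, χ s :=
      intervalIntegral.integral_interval_sub_left (hχcont.intervalIntegrable _ _)
        (hχcont.intervalIntegrable _ _)
    have h0 : ∫ s in b2..t, χ s = ∫ s in b2..t, (0:ℝ) := by
      refine intervalIntegral.integral_congr fun s hs => ?_
      rw [uIcc_of_le ht] at hs
      apply Real.smoothTransition.zero_of_nonpos
      apply div_nonpos_of_nonpos_of_nonneg _ hd0.le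
      linarith [hs.1]
    rw [h0] at this; simp at this; linarith
  refine ⟨fun t => G t / G b2, hGc.div_const _, by simp [hG], ⟨b2, by rw [hb2]; linarith, ?_⟩, ?_⟩
  · intro t ht; simp only; rw [hconst t ht, div_self hk0.ne']
  · intro t
    rw [deriv_div_const, hdG, abs_div, abs_of_pos hk0, abs_of_nonneg (Real.smoothTransition.nonneg _),
      div_le_iff₀ hk0]
    have : L * b1 = 1 := mul_inv_cancel₀ hL0.ne'
    nlinarith [Real.smoothTransition.le_one ((b2 - t)/d)]

theorem cone_null {N : ℕ} (i j : Fin N) (hij : i ≠ j) (a : ℝ) :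
    volume {x : EuclideanSpace ℝ (Fin N) | x i = a * ‖x‖} = 0 := by
  have hms : MeasurableSet {x : EuclideanSpace ℝ (Fin N) | x i ≠ a * ‖x‖} := by
    apply IsOpen.measurableSet
    apply isOpen_ne_fun <;> fun_prop
  have key : ∀ᵐ x : EuclideanSpace ℝ (Fin N), x ∈ {x : EuclideanSpace ℝ (Fin N) | x i ≠ a * ‖x‖} := by
    by_cases ha : a = 0
    · subst ha
      let L : ℝ →ₗ[ℝ] EuclideanSpace ℝ (Fin N) :=
        LinearMap.toSpanSingleton ℝ _ (EuclideanSpace.single i (1:ℝ))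
      refine ae_mem_of_ae_add_linearMap_mem L volume volume hms fun y => ?_
      have : volume ({- y i} : Set ℝ) = 0 := by simp
      rw [ae_iff]
      refine measure_mono_null ?_ this
      intro t ht
      simp [L] at ht
      simp; linarith
    · let L : ℝ →ₗ[ℝ] EuclideanSpace ℝ (Fin N) :=
        LinearMap.toSpanSingleton ℝ _ (EuclideanSpace.single j (1:ℝ))
      refine ae_mem_of_ae_add_linearMap_mem L volume volume hms fun y => ?_
      set D := (y i / a)^2 - ‖y‖^2 + (y j)^2
      have : volume ({√D - y j, -√D - y j} : Set ℝ) = 0 := (Set.toFinite _).measure_zero _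
      rw [ae_iff]
      refine measure_mono_null ?_ this
      intro t ht
      simp [L, hij] at ht
      have h1 : ‖y + t • EuclideanSpace.single j (1:ℝ)‖^2 = ‖y‖^2 + 2 * t * y j + t^2 := by
        rw [norm_add_sq_real, inner_smul_right, norm_smul, EuclideanSpace.inner_single_right]
        simp; ring
      have h2 : y i / a = ‖y + t • EuclideanSpace.single j (1:ℝ)‖ := by
        rw [ht]; field_simp
      have h3 : (t + y j)^2 = D := by
        simp only [D]; rw [h2, h1]; ring
      have h4 : (t + y j)^2 = (√D)^2 := by rw [Real.sq_sqrt (h3 ▸ sq_nonneg _), h3]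
      rcases sq_eq_sq_iff_eq_or_eq_neg.1 h4 with h | h
      · left; linarith
      · right; simp; linarith
  rw [ae_iff] at key
  simpa using key

theorem strip_small {N : ℕ} (i j : Fin N) (hij : i ≠ j) (ε : ℝ≥0∞) (hε : 0 < ε) :
    ∃ δ > 0, ∀ a : ℝ, (volume : Measure (EuclideanSpace ℝ (Fin N))).toSphere
      {θ | |(θ : EuclideanSpace ℝ (Fin N)) i - a| < δ} < ε := by
  set σ := (volume : Measure (EuclideanSpace ℝ (Fin N))).toSphere
  have hc : Continuous (fun θ : sphere (0 : EuclideanSpace ℝ (Fin N)) 1 =>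
    (θ : EuclideanSpace ℝ (Fin N)) i) := by fun_prop
  set ν := σ.map (fun θ : sphere (0 : EuclideanSpace ℝ (Fin N)) 1 => (θ : EuclideanSpace ℝ (Fin N)) i)
  have hfin : IsFiniteMeasure ν := Measure.isFiniteMeasure_map _ _
  have hatom : ∀ a, ν {a} = 0 := by
    intro a
    rw [Measure.map_apply hc.measurable (measurableSet_singleton a),
      Measure.toSphere_apply' _ (hc.measurable (measurableSet_singleton a))]
    refine mul_eq_zero_of_right _ (measure_mono_null ?_ (cone_null i j hij a))
    rintro _ ⟨t, ht, _, ⟨θ, hθ, rfl⟩, rfl⟩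
    have h1 : ‖(θ : EuclideanSpace ℝ (Fin N))‖ = 1 := by simp
    have hθ' : (θ : EuclideanSpace ℝ (Fin N)) i = a := hθ
    simp [norm_smul, abs_of_pos ht.1, hθ', mul_comm]
  have hU : ∀ a : ℝ, ∃ U : Set ℝ, {a} ⊆ U ∧ IsOpen U ∧ ν U < ε := fun a =>
    Set.exists_isOpen_lt_of_lt {a} ε (by rw [hatom]; exact hε)
  choose U hUa hUo hUε using hU
  obtain ⟨δ, hδ, hδU⟩ := lebesgue_number_lemma_of_metric (s := Icc (-2:ℝ) 2) isCompact_Icc hUo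
    (fun a _ => mem_iUnion.2 ⟨a, hUa a rfl⟩)
  refine ⟨min δ 1, by positivity, fun a => ?_⟩
  by_cases ha : a ∈ Icc (-2:ℝ) 2
  · obtain ⟨b, hb⟩ := hδU a ha
    refine lt_of_le_of_lt ?_ (hUε b)
    rw [Measure.map_apply hc.measurable (hUo b).measurableSet]
    refine measure_mono fun θ hθ => hb ?_
    rw [mem_ball, Real.dist_eq]
    exact lt_of_lt_of_le hθ (min_le_left _ _)
  · have : {θ : sphere (0 : EuclideanSpace ℝ (Fin N)) 1 |
        |(θ : EuclideanSpace ℝ (Fin N)) i - a| < min δ 1} = ∅ := by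
      ext θ
      simp only [mem_ofPred_eq, mem_empty_iff_false, iff_false]
      intro h
      have h1 : ‖(θ : EuclideanSpace ℝ (Fin N))‖ = 1 := by simp
      have h2 := PiLp.norm_apply_le (θ : EuclideanSpace ℝ (Fin N)) i
      rw [h1, Real.norm_eq_abs, abs_le] at h2
      have h3 := lt_of_lt_of_le h (min_le_right _ _)
      rw [abs_lt] at h3
      exact ha ⟨by linarith, by linarith⟩
    rw [this]; simpa using hε

theorem energy_polar {N : ℕ} [Nontrivial (EuclideanSpace ℝ (Fin N))] (p : ℝ) (hp : 1 < p)
    (φ : EuclideanSpace ℝ (Fin N) → ℝ)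
    (hφ : ContDiff ℝ (⊤ : ℕ∞) φ) (hc : HasCompactSupport φ) (x₀ : EuclideanSpace ℝ (Fin N)) :
    ENNReal.ofReal (∫ x, ‖fderiv ℝ φ x‖ ^ p) =
      ∫⁻ θ : sphere (0 : EuclideanSpace ℝ (Fin N)) 1, (∫⁻ t in Ioi (0:ℝ),
        ENNReal.ofReal (t ^ (N - 1)) * ENNReal.ofReal
          (‖fderiv ℝ φ (x₀ + t • (θ : EuclideanSpace ℝ (Fin N)))‖ ^ p))
        ∂(volume : Measure (EuclideanSpace ℝ (Fin N))).toSphere := by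
  have hfc : Continuous (fderiv ℝ φ) := hφ.continuous_fderiv (by simp)
  have hpc : Continuous (fun x => ‖fderiv ℝ φ x‖ ^ p) :=
    hfc.norm.rpow_const (fun x => Or.inr (by linarith))
  have hint : Integrable (fun x => ‖fderiv ℝ φ x‖ ^ p) := by
    apply hpc.integrable_of_hasCompactSupport
    refine (hc.fderiv (𝕜 := ℝ)).comp_left (g := fun v => ‖v‖ ^ p) ?_
    simp only [norm_zero]
    exact Real.zero_rpow (by linarith)
  rw [ofReal_integral_eq_lintegral_ofReal hint (ae_of_all _ fun x => by positivity),
    ← lintegral_add_left_eq_self _ x₀, lintegral_polar volume]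
  · simp
  · apply Measurable.ennreal_ofReal
    exact (hpc.comp (continuous_const_add x₀)).measurable

theorem pCapacity_le {N : ℕ} (p : ℝ) (K E : Set (EuclideanSpace ℝ (Fin N)))
    (φ : EuclideanSpace ℝ (Fin N) → ℝ)
    (hφ : ContDiff ℝ (⊤ : ℕ∞) φ) (hc : HasCompactSupport φ) (hE : tsupport φ ⊆ E)
    (hK : ∀ x ∈ K, 1 ≤ φ x) : pCapacity p K E ≤ ∫ x, ‖fderiv ℝ φ x‖ ^ p := by
  apply csInf_le
  · refine ⟨0, ?_⟩
    rintro _ ⟨ψ, -, -, -, -, rfl⟩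
    exact integral_nonneg fun x => by positivity
  · exact ⟨φ, hφ, hc, hE, hK, rfl⟩

theorem radial_aux {N : ℕ} [Nontrivial (EuclideanSpace ℝ (Fin N))] (p : ℝ) (hp : 1 < p)
    (φ : EuclideanSpace ℝ (Fin N) → ℝ)
    (hφ : ContDiff ℝ (⊤ : ℕ∞) φ) (hc : HasCompactSupport φ) (x₀ : EuclideanSpace ℝ (Fin N))
    (r : ℝ) (hr : 0 < r) (hE : tsupport φ ⊆ ball x₀ (2 * r))
    (θ : EuclideanSpace ℝ (Fin N)) (hθ : ‖θ‖ = 1) (h1 : 1 ≤ φ (x₀ + r • θ)) (L : ℝ) (hL : 1 < L) :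
    ENNReal.ofReal (pCapacity p (closedBall x₀ r) (ball x₀ (2 * r))) ≤
      ENNReal.ofReal (L ^ p) * ((volume : Measure (EuclideanSpace ℝ (Fin N))).toSphere univ *
        ∫⁻ t in Ioi r, ENNReal.ofReal (t ^ (N - 1)) * ENNReal.ofReal
          (‖fderiv ℝ φ (x₀ + t • θ)‖ ^ p)) := by
  obtain ⟨H, hH, hH0, ⟨b, hb, hHb⟩, hHL⟩ := exists_trunc L hL
  -- the one dimensional profile
  set f : ℝ → ℝ := fun t => H (φ (x₀ + t • θ)) with hf
  have hfs : ContDiff ℝ (⊤ : ℕ∞) f := by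
    apply hH.comp
    apply hφ.comp
    fun_prop
  have hfd : ∀ t, |deriv f t| ≤ L * ‖fderiv ℝ φ (x₀ + t • θ)‖ := by
    intro t
    have e1 : HasDerivAt (fun t : ℝ => x₀ + t • θ) θ t := by
      simpa using ((hasDerivAt_id t).smul_const θ).const_add x₀
    have e2 : HasDerivAt (fun t : ℝ => φ (x₀ + t • θ)) (fderiv ℝ φ (x₀ + t • θ) θ) t :=
      ((hφ.differentiable (by simp) _).hasFDerivAt).comp_hasDerivAt t e1
    have e3 : HasDerivAt f (deriv H (φ (x₀ + t • θ)) * (fderiv ℝ φ (x₀ + t • θ) θ)) t :=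
      ((hH.differentiable (by simp) _).hasDerivAt).comp t e2
    rw [e3.deriv, abs_mul]
    refine mul_le_mul (hHL _) ?_ (abs_nonneg _) (by linarith)
    have := (fderiv ℝ φ (x₀ + t • θ)).le_opNorm θ
    rwa [hθ, mul_one] at this
  -- constancy near `r`
  obtain ⟨s, hs, hfs1⟩ : ∃ s > 0, ∀ t, |t - r| < s → f t = 1 := by
    have hcont : Continuous (fun t : ℝ => φ (x₀ + t • θ)) := by
      have := hφ.continuous
      fun_prop
    have : ∀ᶠ t in nhds r, b < φ (x₀ + t • θ) :=
      hcont.continuousAt.eventually (lt_mem_nhds (lt_of_lt_of_le hb h1))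
    obtain ⟨s, hs, hs'⟩ := Metric.eventually_nhds_iff.1 this
    exact ⟨s, hs, fun t ht => hHb _ (hs' (by rwa [Real.dist_eq])).le⟩
  -- support
  obtain ⟨R, hrR, hR2, hR⟩ : ∃ R, r < R ∧ R < 2 * r ∧ ∀ t, R < t → f t = 0 := by
    obtain ⟨R₀, hR₀, hsub⟩ := exists_lt_subset_ball (isClosed_tsupport φ) hE
    refine ⟨max R₀ (3/2*r), lt_of_lt_of_le (by linarith) (le_max_right _ _),
      max_lt hR₀ (by linarith), fun t ht => ?_⟩
    have htr : 0 < t := by have := le_max_right R₀ (3/2*r); linarith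
    have : x₀ + t • θ ∉ tsupport φ := by
      intro hmem
      have := hsub hmem
      rw [mem_ball, dist_eq_norm, add_sub_cancel_left, norm_smul, hθ, mul_one, Real.norm_eq_abs,
        abs_of_pos htr] at this
      have := le_max_left R₀ (3/2*r); linarith
    simp only [hf]
    rw [image_eq_zero_of_notMem_tsupport this, hH0]
  set g : EuclideanSpace ℝ (Fin N) → ℝ := fun y => if ‖y - x₀‖ ≤ r then 1 else f ‖y - x₀‖ with hg
  have hgin : ∀ y, ‖y - x₀‖ < r + s → g y = 1 := by
    intro y hy
    simp only [hg]
    split_ifs with h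
    · rfl
    · apply hfs1; rw [abs_lt]; constructor <;> linarith
  have hgout : ∀ y, r < ‖y - x₀‖ → g y = f ‖y - x₀‖ := by
    intro y hy
    simp only [hg]
    rw [if_neg (not_le.2 hy)]
  have hlin : ∀ y, ‖y - x₀‖ ≤ r → g =ᶠ[nhds y] fun _ => 1 := by
    intro y hy
    have : IsOpen {z : EuclideanSpace ℝ (Fin N) | ‖z - x₀‖ < r + s} :=
      isOpen_lt (by fun_prop) (by fun_prop)
    filter_upwards [this.mem_nhds (show ‖y - x₀‖ < r + s by linarith)] with z hz using hgin z hz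
  have hlout : ∀ y, r < ‖y - x₀‖ → g =ᶠ[nhds y] fun z => f ‖z - x₀‖ := by
    intro y hy
    have : IsOpen {z : EuclideanSpace ℝ (Fin N) | r < ‖z - x₀‖} :=
      isOpen_lt (by fun_prop) (by fun_prop)
    filter_upwards [this.mem_nhds hy] with z hz using hgout z hz
  have hgs : ContDiff ℝ (⊤ : ℕ∞) g := by
    rw [contDiff_iff_contDiffAt]
    intro y
    rcases le_or_gt ‖y - x₀‖ r with h | h
    · exact contDiffAt_const.congr_of_eventuallyEq (hlin y h)
    · refine ContDiffAt.congr_of_eventuallyEq ?_ (hlout y h)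
      have hne : y - x₀ ≠ 0 := by
        intro h0; rw [h0, norm_zero] at h; linarith
      exact hfs.contDiffAt.comp y ((contDiffAt_id.sub contDiffAt_const).norm ℝ hne)
  have hgsupp : tsupport g ⊆ closedBall x₀ R := by
    refine closure_minimal ?_ isClosed_closedBall
    intro y hy
    by_contra hn
    rw [mem_closedBall, dist_eq_norm, not_le] at hn
    apply hy
    rw [hgout y (hrR.trans hn), hR _ hn]
  have hgcs : HasCompactSupport g :=
    (isCompact_closedBall x₀ R).of_isClosed_subset (isClosed_tsupport g) hgsupp
  have hle := pCapacity_le p (closedBall x₀ r) (ball x₀ (2 * r)) g hgs hgcs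
    (hgsupp.trans (closedBall_subset_ball hR2)) (by
      intro y hy
      rw [mem_closedBall, dist_eq_norm] at hy
      rw [hgin y (by linarith)])
  refine (ENNReal.ofReal_le_ofReal hle).trans ?_
  rw [energy_polar p hp g hgs hgcs x₀]
  have hpt : ∀ ω : sphere (0 : EuclideanSpace ℝ (Fin N)) 1, ∀ t ∈ Ioi (0:ℝ),
      ENNReal.ofReal (t ^ (N - 1)) * ENNReal.ofReal
          (‖fderiv ℝ g (x₀ + t • (ω : EuclideanSpace ℝ (Fin N)))‖ ^ p) ≤
      (Ioi r).indicator (fun t => ENNReal.ofReal (L ^ p) * (ENNReal.ofReal (t ^ (N - 1)) *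
        ENNReal.ofReal (‖fderiv ℝ φ (x₀ + t • θ)‖ ^ p))) t := by
    intro ω t ht
    have hω : ‖(ω : EuclideanSpace ℝ (Fin N))‖ = 1 := by simp
    have hn : ‖x₀ + t • (ω : EuclideanSpace ℝ (Fin N)) - x₀‖ = t := by
      rw [add_sub_cancel_left, norm_smul, hω, mul_one, Real.norm_eq_abs, abs_of_pos ht]
    rcases le_or_gt t r with h | h
    · rw [(hlin _ (hn.trans_le h)).fderiv_eq]
      simp [Real.zero_rpow (show p ≠ 0 by linarith)]
    · rw [indicator_of_mem (show t ∈ Ioi r from h), (hlout _ (by rwa [hn])).fderiv_eq]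
      have hb : ‖fderiv ℝ (fun z => f ‖z - x₀‖) (x₀ + t • (ω : EuclideanSpace ℝ (Fin N)))‖ ≤
          L * ‖fderiv ℝ φ (x₀ + t • θ)‖ := by
        refine le_trans ?_ (hfd t)
        set y := x₀ + t • (ω : EuclideanSpace ℝ (Fin N))
        have hne : y - x₀ ≠ 0 := by
          intro h0; rw [h0, norm_zero] at hn; rw [← hn] at ht; exact lt_irrefl (0:ℝ) ht
        have d1 : DifferentiableAt ℝ (fun z : EuclideanSpace ℝ (Fin N) => ‖z - x₀‖) y :=
          (differentiableAt_id.sub (differentiableAt_const _)).norm ℝ hne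
        have d2 : HasDerivAt f (deriv f t) ‖y - x₀‖ := by
          rw [hn]; exact (hfs.differentiable (by simp) t).hasDerivAt
        have d3 := d2.comp_hasFDerivAt y d1.hasFDerivAt
        have d4 : fderiv ℝ (fun z => f ‖z - x₀‖) y =
          deriv f t • fderiv ℝ (fun z : EuclideanSpace ℝ (Fin N) => ‖z - x₀‖) y := d3.fderiv
        rw [d4, norm_smul, Real.norm_eq_abs]
        have d5 : ‖fderiv ℝ (fun z : EuclideanSpace ℝ (Fin N) => ‖z - x₀‖) y‖ ≤ (1 : NNReal) := by
          apply norm_fderiv_le_of_lipschitz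
          refine LipschitzWith.of_dist_le_mul fun u v => ?_
          simpa [dist_eq_norm] using abs_norm_sub_norm_le (u - x₀) (v - x₀)
        exact mul_le_of_le_one_right (abs_nonneg _) d5
      have hLp : 0 ≤ L ^ p := Real.rpow_nonneg (by linarith) p
      rw [mul_left_comm, ← ENNReal.ofReal_mul hLp]
      refine mul_le_mul_right (ENNReal.ofReal_le_ofReal ?_) _
      rw [← Real.mul_rpow (by linarith) (norm_nonneg _)]
      exact Real.rpow_le_rpow (norm_nonneg _) hb (by linarith)
  calc _ ≤ ∫⁻ ω : sphere (0 : EuclideanSpace ℝ (Fin N)) 1, (ENNReal.ofReal (L ^ p) *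
        ∫⁻ t in Ioi r, ENNReal.ofReal (t ^ (N - 1)) * ENNReal.ofReal
          (‖fderiv ℝ φ (x₀ + t • θ)‖ ^ p)) ∂(volume : Measure (EuclideanSpace ℝ (Fin N))).toSphere := by
        refine lintegral_mono fun ω => ?_
        refine (setLIntegral_mono' measurableSet_Ioi (hpt ω)).trans ?_
        rw [lintegral_indicator measurableSet_Ioi, Measure.restrict_restrict measurableSet_Ioi,
          lintegral_const_mul' _ _ ENNReal.ofReal_ne_top]
        gcongr
        exact inter_subset_left
    _ = _ := by
        rw [lintegral_const]; ring

theorem radial_comparison {N : ℕ} [Nontrivial (EuclideanSpace ℝ (Fin N))] (p : ℝ) (hp : 1 < p)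
    (φ : EuclideanSpace ℝ (Fin N) → ℝ)
    (hφ : ContDiff ℝ (⊤ : ℕ∞) φ) (hc : HasCompactSupport φ) (x₀ : EuclideanSpace ℝ (Fin N))
    (r : ℝ) (hr : 0 < r) (hE : tsupport φ ⊆ ball x₀ (2 * r))
    (θ : EuclideanSpace ℝ (Fin N)) (hθ : ‖θ‖ = 1) (h1 : 1 ≤ φ (x₀ + r • θ)) :
    ENNReal.ofReal (pCapacity p (closedBall x₀ r) (ball x₀ (2 * r))) ≤
      (volume : Measure (EuclideanSpace ℝ (Fin N))).toSphere univ *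
        ∫⁻ t in Ioi r, ENNReal.ofReal (t ^ (N - 1)) * ENNReal.ofReal
          (‖fderiv ℝ φ (x₀ + t • θ)‖ ^ p) := by
  set A := (volume : Measure (EuclideanSpace ℝ (Fin N))).toSphere univ *
        ∫⁻ t in Ioi r, ENNReal.ofReal (t ^ (N - 1)) * ENNReal.ofReal
          (‖fderiv ℝ φ (x₀ + t • θ)‖ ^ p)
  have hlim : Tendsto (fun L : ℝ => ENNReal.ofReal (L ^ p) * A) (nhdsWithin 1 (Ioi 1))
      (nhds (1 * A)) := by
    refine ENNReal.Tendsto.mul_const ?_ (Or.inl one_ne_zero)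
    have : ContinuousAt (fun L : ℝ => ENNReal.ofReal (L ^ p)) 1 :=
      ENNReal.continuous_ofReal.continuousAt.comp
        (Real.continuousAt_rpow_const 1 p (Or.inl one_ne_zero))
    have h := this.tendsto.mono_left (nhdsWithin_le_nhds (s := Ioi 1))
    simpa using h
  rw [one_mul] at hlim
  refine ge_of_tendsto hlim ?_
  filter_upwards [self_mem_nhdsWithin] with L hL
  exact radial_aux p hp φ hφ hc x₀ r hr hE θ hθ h1 L hL

theorem ray_lower {N : ℕ} (p : ℝ) (hp : 1 < p)
    (φ : EuclideanSpace ℝ (Fin N) → ℝ)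
    (hφ : ContDiff ℝ (⊤ : ℕ∞) φ) (x₀ : EuclideanSpace ℝ (Fin N))
    (r : ℝ) (hr : 0 < r) (hE : tsupport φ ⊆ ball x₀ (2 * r))
    (θ : EuclideanSpace ℝ (Fin N)) (hθ : ‖θ‖ = 1) (h1 : 1 ≤ φ (x₀ + r • θ)) :
    ENNReal.ofReal (r ^ (N - 1) * (r / r ^ p)) ≤
        ∫⁻ t in Ioi r, ENNReal.ofReal (t ^ (N - 1)) * ENNReal.ofReal
          (‖fderiv ℝ φ (x₀ + t • θ)‖ ^ p) := by
  have hfc : Continuous (fderiv ℝ φ) := hφ.continuous_fderiv (by simp)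
  have hfc' : Continuous (fun t : ℝ => fderiv ℝ φ (x₀ + t • θ)) := by fun_prop
  have hpc : Continuous (fun t : ℝ => ‖fderiv ℝ φ (x₀ + t • θ)‖ ^ p) :=
    hfc'.norm.rpow_const (fun x => Or.inr (by linarith))
  have hdc : Continuous (fun t : ℝ => fderiv ℝ φ (x₀ + t • θ) θ) := hfc'.clm_apply continuous_const
  have hrp : 0 < r ^ p := Real.rpow_pos_of_pos hr p
  have e2 : ∀ t, HasDerivAt (fun t : ℝ => φ (x₀ + t • θ)) (fderiv ℝ φ (x₀ + t • θ) θ) t := by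
    intro t
    have e1 : HasDerivAt (fun t : ℝ => x₀ + t • θ) θ t := by
      simpa using ((hasDerivAt_id t).smul_const θ).const_add x₀
    exact ((hφ.differentiable (by simp) _).hasFDerivAt).comp_hasDerivAt t e1
  have hftc : ∫ t in r..(2*r), fderiv ℝ φ (x₀ + t • θ) θ = φ (x₀ + (2*r) • θ) - φ (x₀ + r • θ) :=
    intervalIntegral.integral_eq_sub_of_hasDerivAt (fun t _ => e2 t) (hdc.intervalIntegrable _ _)
  have hz : φ (x₀ + (2*r) • θ) = 0 := by
    apply image_eq_zero_of_notMem_tsupport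
    intro hmem
    have := hE hmem
    rw [mem_ball, dist_eq_norm, add_sub_cancel_left, norm_smul, hθ, mul_one, Real.norm_eq_abs,
        abs_of_pos (by linarith)] at this
    exact lt_irrefl _ this
  have hpw : ∀ t : ℝ, -(p * r) * (fderiv ℝ φ (x₀ + t • θ) θ) - (p - 1) ≤
      r ^ p * ‖fderiv ℝ φ (x₀ + t • θ)‖ ^ p := by
    intro t
    set v := ‖fderiv ℝ φ (x₀ + t • θ)‖
    have hv : 0 ≤ v := norm_nonneg _
    have h2 : |fderiv ℝ φ (x₀ + t • θ) θ| ≤ v := by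
      have := (fderiv ℝ φ (x₀ + t • θ)).le_opNorm θ
      rwa [hθ, mul_one] at this
    have h3 := one_add_mul_self_le_rpow_one_add (s := r * v - 1) (p := p)
      (by have := mul_nonneg hr.le hv; linarith) hp.le
    rw [← Real.mul_rpow hr.le hv]
    have h4 : 1 + (r * v - 1) = r * v := by ring
    rw [h4] at h3
    have h5 : -(fderiv ℝ φ (x₀ + t • θ) θ) ≤ v := (neg_le_abs _).trans h2
    have h6 : (p * r) * (-(fderiv ℝ φ (x₀ + t • θ) θ)) ≤ (p * r) * v :=
      mul_le_mul_of_nonneg_left h5 (by positivity)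
    linarith
  have hI : r / r ^ p ≤ ∫ t in r..(2*r), ‖fderiv ℝ φ (x₀ + t • θ)‖ ^ p := by
    rw [div_le_iff₀' hrp, ← intervalIntegral.integral_const_mul]
    have := intervalIntegral.integral_mono (a := r) (b := 2*r) (μ := volume) (by linarith)
      ((Continuous.intervalIntegrable (by fun_prop) _ _)) 
      ((Continuous.intervalIntegrable (by fun_prop) _ _)) hpw
    rw [intervalIntegral.integral_sub (Continuous.intervalIntegrable (by fun_prop) _ _) (by simp),
      intervalIntegral.integral_const_mul, hftc, hz] at this
    simp only [intervalIntegral.integral_const, smul_eq_mul] at this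
    have h7 : p * r * 1 ≤ p * r * φ (x₀ + r • θ) := mul_le_mul_of_nonneg_left h1 (by positivity)
    linarith
  calc _ = ENNReal.ofReal (r ^ (N - 1)) * ENNReal.ofReal (r / r ^ p) :=
        ENNReal.ofReal_mul (by positivity)
    _ ≤ ENNReal.ofReal (r ^ (N - 1)) *
        ENNReal.ofReal (∫ t in r..(2*r), ‖fderiv ℝ φ (x₀ + t • θ)‖ ^ p) := by gcongr
    _ = ENNReal.ofReal (r ^ (N - 1)) *
        ∫⁻ t in Ioc r (2*r), ENNReal.ofReal (‖fderiv ℝ φ (x₀ + t • θ)‖ ^ p) := by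
        rw [intervalIntegral.integral_of_le (by linarith), ofReal_integral_eq_lintegral_ofReal]
        · exact (hpc.intervalIntegrable r (2*r)).1
        · exact ae_of_all _ fun t => by positivity
    _ = ∫⁻ t in Ioc r (2*r), ENNReal.ofReal (r ^ (N - 1)) *
          ENNReal.ofReal (‖fderiv ℝ φ (x₀ + t • θ)‖ ^ p) := by
        rw [lintegral_const_mul' _ _ ENNReal.ofReal_ne_top]
    _ ≤ ∫⁻ t in Ioc r (2*r), ENNReal.ofReal (t ^ (N - 1)) *
          ENNReal.ofReal (‖fderiv ℝ φ (x₀ + t • θ)‖ ^ p) := by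
        refine setLIntegral_mono' measurableSet_Ioc fun t ht => ?_
        have := ht.1.le
        gcongr
    _ ≤ _ := lintegral_mono_set Ioc_subset_Ioi_self

theorem energy_lower {N : ℕ} [Nontrivial (EuclideanSpace ℝ (Fin N))] (p : ℝ) (hp : 1 < p)
    (φ : EuclideanSpace ℝ (Fin N) → ℝ)
    (hφ : ContDiff ℝ (⊤ : ℕ∞) φ) (hc : HasCompactSupport φ) (x₀ : EuclideanSpace ℝ (Fin N))
    (r : ℝ) (hr : 0 < r) (S : Set (sphere (0 : EuclideanSpace ℝ (Fin N)) 1)) (hS : MeasurableSet S)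
    (c : ℝ≥0∞) (h : ∀ θ ∈ S, c ≤ ∫⁻ t in Ioi r, ENNReal.ofReal (t ^ (N - 1)) * ENNReal.ofReal
          (‖fderiv ℝ φ (x₀ + t • (θ : EuclideanSpace ℝ (Fin N)))‖ ^ p)) :
    c * (volume : Measure (EuclideanSpace ℝ (Fin N))).toSphere S ≤
      ENNReal.ofReal (∫ x, ‖fderiv ℝ φ x‖ ^ p) := by
  rw [energy_polar p hp φ hφ hc x₀, ← setLIntegral_const]
  refine (setLIntegral_mono' hS fun θ hθ => ?_).trans (setLIntegral_le_lintegral S _)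
  exact (h θ hθ).trans (lintegral_mono_set (Ioi_subset_Ioi hr.le))

theorem admissible_nonempty {N : ℕ} (p : ℝ) (x₀ : EuclideanSpace ℝ (Fin N)) (r : ℝ) (hr : 0 < r)
    (K : Set (EuclideanSpace ℝ (Fin N))) (hK : K ⊆ closedBall x₀ r) :
    {c : ℝ | ∃ φ : EuclideanSpace ℝ (Fin N) → ℝ, ContDiff ℝ (⊤ : ℕ∞) φ ∧ HasCompactSupport φ ∧
    tsupport φ ⊆ ball x₀ (2 * r) ∧ (∀ x ∈ K, 1 ≤ φ x) ∧ c = ∫ x, ‖fderiv ℝ φ x‖ ^ p}.Nonempty := by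
  let B : ContDiffBump x₀ := ⟨r, 3/2*r, hr, by linarith⟩
  refine ⟨_, B, B.contDiff, B.hasCompactSupport, ?_, ?_, rfl⟩
  · rw [B.tsupport_eq]; exact closedBall_subset_ball (by simp only [B]; linarith)
  · intro x hx
    rw [B.one_of_mem_closedBall (hK hx)]

end Helpers

/-- The open slab `ℝ^{N-1} × (-1,1)` has finite `(p,γ)`-capacitary inradius for every
`1 < p < N` and every `0 < γ < 1`. -/
theorem slab_capInradius_finite (N : ℕ) (p γ : ℝ)
    (hN : 2 ≤ N) (hp1 : 1 < p) (hpN : p < (N:ℝ)) (hγ0 : 0 < γ) (hγ1 : γ < 1) :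
    capInradius p γ {x : EuclideanSpace ℝ (Fin N) | |x ⟨N - 1, by omega⟩| < 1} ≠ ⊤ := by
  have hN1 : N - 1 < N := by omega
  set i : Fin N := ⟨N - 1, hN1⟩ with hi
  set j : Fin N := ⟨0, by omega⟩ with hj
  have hij : i ≠ j := by
    intro h; simp [hi, hj, Fin.ext_iff] at h; omega
  have : Nonempty (Fin N) := ⟨i⟩
  have : Nontrivial (EuclideanSpace ℝ (Fin N)) :=
    Module.nontrivial_of_finrank_pos (R := ℝ) (by simp; omega)
  set σ := (volume : Measure (EuclideanSpace ℝ (Fin N))).toSphere with hσ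
  have hσ0 : σ Set.univ ≠ 0 := by
    rw [Ne, Measure.measure_univ_eq_zero]; exact Measure.toSphere_ne_zero _
  have hσr : 0 < σ.real Set.univ := ENNReal.toReal_pos hσ0 (measure_ne_top _ _)
  obtain ⟨δ, hδ, hstrip⟩ := strip_small i j hij (ENNReal.ofReal ((1 - γ) * σ.real Set.univ))
    (ENNReal.ofReal_pos.2 (mul_pos (by linarith) hσr))
  suffices hb : capInradius p γ {x : EuclideanSpace ℝ (Fin N) | |x i| < 1} ≤ ENNReal.ofReal (1/δ) from
    ne_top_of_le_ne_top ENNReal.ofReal_ne_top hb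
  refine sSup_le ?_
  rintro _ ⟨r, hr, rfl, x₀, hneg⟩
  refine ENNReal.ofReal_le_ofReal ?_
  by_contra hlt
  rw [not_le] at hlt
  have hrδ : 1 / r < δ := by
    rw [div_lt_iff₀ hδ] at hlt
    rw [div_lt_iff₀ hr]; linarith
  unfold IsNegligible at hneg
  set Ω : Set (EuclideanSpace ℝ (Fin N)) := {x | |x i| < 1} with hΩ
  set C := pCapacity p (Metric.closedBall x₀ r) (Metric.ball x₀ (2 * r)) with hC
  -- positivity of the capacity of the ball
  have hCpos : 0 < C := by
    set m := r ^ (N - 1) * (r / r ^ p)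
    have hm : 0 < m := by positivity
    refine lt_of_lt_of_le (mul_pos hm hσr) ?_
    refine le_csInf (admissible_nonempty p x₀ r hr _ subset_rfl) ?_
    rintro _ ⟨φ, hφ, hc, hE, hK, rfl⟩
    have := energy_lower p hp1 φ hφ hc x₀ r hr Set.univ MeasurableSet.univ (ENNReal.ofReal m)
      (fun θ _ => ray_lower p hp1 φ hφ x₀ r hr hE θ (by simp) (hK _ (by
        simp [norm_smul, abs_of_pos hr])))
    rw [← ENNReal.ofReal_le_ofReal_iff (integral_nonneg fun x => by positivity)]
    rwa [ENNReal.ofReal_mul hm.le, measureReal_def, ENNReal.ofReal_toReal (measure_ne_top _ _)]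
  -- good directions
  set S : Set (Metric.sphere (0 : EuclideanSpace ℝ (Fin N)) 1) :=
    {θ | |(θ : EuclideanSpace ℝ (Fin N)) i - (- x₀ i / r)| < 1 / r}ᶜ with hS
  have hSm : MeasurableSet S := by
    apply MeasurableSet.compl
    apply IsOpen.measurableSet
    exact isOpen_lt (by fun_prop) (by fun_prop)
  have hSγ : γ * σ.real Set.univ < σ.real S := by
    have h1 : σ.real Sᶜ < (1 - γ) * σ.real Set.univ := by
      have h2 : σ Sᶜ < ENNReal.ofReal ((1 - γ) * σ.real Set.univ) := by
        refine lt_of_le_of_lt (measure_mono ?_) (hstrip (- x₀ i / r))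
        rw [hS, compl_compl]
        intro θ hθ
        exact lt_trans hθ hrδ
      exact (ENNReal.lt_ofReal_iff_toReal_lt (measure_ne_top _ _)).1 h2
    have h3 := measureReal_add_measureReal_compl (μ := σ) hSm
    linarith
  have hfinal : C * σ.real S / σ.real Set.univ ≤
      pCapacity p (Metric.closedBall x₀ r \ Ω) (Metric.ball x₀ (2 * r)) := by
    refine le_csInf (admissible_nonempty p x₀ r hr _ Set.sdiff_subset) ?_
    rintro _ ⟨φ, hφ, hc, hE, hK, rfl⟩
    rw [div_le_iff₀ hσr]
    have hE0 : 0 ≤ ∫ x, ‖fderiv ℝ φ x‖ ^ p := integral_nonneg fun x => by positivity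
    have := energy_lower p hp1 φ hφ hc x₀ r hr S hSm (ENNReal.ofReal C / σ Set.univ) (by
      intro θ hθ
      refine ENNReal.div_le_of_le_mul' ?_
      refine radial_comparison p hp1 φ hφ hc x₀ r hr hE θ (by simp) (hK _ ⟨by
        simp [norm_smul, abs_of_pos hr], ?_⟩)
      intro hmem
      apply hθ
      have h1 : |x₀ i + r * (θ : EuclideanSpace ℝ (Fin N)) i| < 1 := by
        simpa [hΩ] using hmem
      have h2 : (θ : EuclideanSpace ℝ (Fin N)) i - (- x₀ i / r) =
          (x₀ i + r * (θ : EuclideanSpace ℝ (Fin N)) i) / r := by field_simp; ring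
      show |(θ : EuclideanSpace ℝ (Fin N)) i - (- x₀ i / r)| < 1 / r
      rw [h2, abs_div, abs_of_pos hr]
      exact div_lt_div_of_pos_right h1 hr)
    have h2 := ENNReal.toReal_mono ENNReal.ofReal_ne_top this
    rw [ENNReal.toReal_ofReal hE0, ENNReal.toReal_mul, ENNReal.toReal_div,
      ENNReal.toReal_ofReal hCpos.le, ← measureReal_def, ← measureReal_def, div_mul_eq_mul_div,
      div_le_iff₀ hσr] at h2
    exact h2
  have h4 : γ * C < C * σ.real S / σ.real Set.univ := by
    rw [lt_div_iff₀ hσr]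
    nlinarith
  linarith
end
end
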